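/- Let q ≥ 1, let ε be a real random variable with E[|ε|^{2s}] < ∞ for some s ≥ 1, and set μ̄ = (E[|ε|^{2s}])^{1/s}. Let α₁,…,α_q ≥ 0 satisfy α₁+⋯+α_q < 1/μ̄, and let Λ_ε be the random q×q companion matrix with first row (α₁ε²,…,α_qε²), ones on the subdiagonal, and zeros elsewhere. Then there exists a monotone vector norm ‖·‖ on ℝ^q such that sup_{‖x‖=1} (E[‖Λ_ε x‖^s])^{1/s} < 1; in particular, (E[‖Λ_ε x‖^s])^{1/s} < ‖x‖ for every x ≠ 0. -/

import Mathlib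

open MeasureTheory

/-- A vector norm on ℝ^d, given as a function satisfying the norm axioms. -/
def IsVectorNorm {d : ℕ} (N : (Fin d → ℝ) → ℝ) : Prop :=
  (∀ x, 0 ≤ N x) ∧ (∀ x, N x = 0 ↔ x = 0) ∧
  (∀ (c : ℝ) (x : Fin d → ℝ), N (c • x) = |c| * N x) ∧
  (∀ x y : Fin d → ℝ, N (x + y) ≤ N x + N y)

/-- A vector norm on ℝ^q is monotone if |x_i| ≤ |y_i| for all i implies ‖x‖ ≤ ‖y‖. -/
def IsMonotoneNorm {d : ℕ} (N : (Fin d → ℝ) → ℝ) : Prop :=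
  ∀ x y : Fin d → ℝ, (∀ i, |x i| ≤ |y i|) → N x ≤ N y

/-- The random companion matrix Λ_ε with first row (α₁ε²,…,α_qε²), ones on the
subdiagonal and zeros elsewhere, as a function of the realization e of ε. -/
def lambdaMat (q : ℕ) (αc : ℕ → ℝ) (e : ℝ) : Matrix (Fin q) (Fin q) ℝ :=
  Matrix.of fun i j =>
    if (i : ℕ) = 0 then αc ((j : ℕ) + 1) * e ^ 2
    else if (i : ℕ) = (j : ℕ) + 1 then 1 else 0


theorem aux_mink (s : ℝ) (hs : 1 ≤ s) (με : Measure ℝ) (hprob : IsProbabilityMeasure με)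
    (hmom : Integrable (fun e => |e| ^ (2 * s)) με) (m : ℝ) (hm : 0 < m)
    (hms : ∫ e, |e| ^ (2 * s) ∂με = m ^ s) (A B : ℝ) (hA : 0 ≤ A) (hB : 0 ≤ B)
    (f : ℝ → ℝ) (hf0 : ∀ e, 0 ≤ f e) (hf : ∀ e, f e ≤ e ^ 2 * A + B) :
    (∫ e, f e ^ s ∂με) ^ (1 / s) ≤ m * A + B := by
  have hs0 : 0 < s := by linarith
  have hAm : 0 ≤ m * A := by positivity
  rcases eq_or_lt_of_le (show 0 ≤ m * A + B by positivity) with h | hT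
  · have hB0 : B = 0 := by linarith
    have hA0 : A = 0 := by
      have : m * A = 0 := by linarith
      rcases mul_eq_zero.1 this with h | h
      · linarith
      · exact h
    have hfz : ∀ e, f e = 0 := fun e => by
      have := hf e
      rw [hA0, hB0] at this
      exact le_antisymm (by linarith) (hf0 e)
    rw [← h]
    simp only [hfz, Real.zero_rpow hs0.ne', integral_zero]
    rw [Real.zero_rpow (by positivity)]
  set T := m * A + B with hTdef
  have key : ∀ e, f e ^ s ≤ T ^ s * ((m * A / T) * (|e| ^ (2 * s) / m ^ s) + B / T) := by
    intro e
    have h1 : f e ≤ T * ((m * A / T) * (e ^ 2 / m) + (B / T) * 1) := by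
      refine (hf e).trans (le_of_eq ?_)
      field_simp
    have h2 := (convexOn_rpow hs).2 (x := e ^ 2 / m) (y := 1)
      (show (0:ℝ) ≤ e ^ 2 / m by positivity) (show (0:ℝ) ≤ 1 by norm_num)
      (show 0 ≤ m * A / T by positivity) (show 0 ≤ B / T by positivity)
      (by rw [← add_div, ← hTdef, div_self hT.ne'])
    simp only [smul_eq_mul, Real.one_rpow, mul_one] at h2 h1
    have h3 : (e ^ 2 / m) ^ s = |e| ^ (2 * s) / m ^ s := by
      rw [Real.div_rpow (by positivity) hm.le, Real.rpow_mul (abs_nonneg e)]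
      congr 2
      rw [← sq_abs]; norm_cast
    rw [h3] at h2
    calc f e ^ s ≤ (T * ((m * A / T) * (e ^ 2 / m) + (B / T))) ^ s :=
          Real.rpow_le_rpow (hf0 e) h1 hs0.le
      _ = T ^ s * ((m * A / T) * (e ^ 2 / m) + (B / T)) ^ s :=
          Real.mul_rpow hT.le (by positivity)
      _ ≤ _ := by gcongr
  have hI : ∫ e, f e ^ s ∂με ≤ T ^ s := by
    have hi : Integrable (fun e => (m * A / T) * (|e| ^ (2 * s) / m ^ s)) με :=
      (hmom.div_const _).const_mul _
    calc ∫ e, f e ^ s ∂με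
        ≤ ∫ e, T ^ s * ((m * A / T) * (|e| ^ (2 * s) / m ^ s) + B / T) ∂με := by
          apply integral_mono_of_nonneg
          · exact Filter.Eventually.of_forall fun e => Real.rpow_nonneg (hf0 e) _
          · exact (hi.add (integrable_const _)).const_mul _
          · exact Filter.Eventually.of_forall key
      _ = T ^ s * ((m * A / T) * (m ^ s / m ^ s) + B / T) := by
          rw [integral_const_mul, integral_add hi (integrable_const _), integral_const_mul,
            integral_div, hms]
          simp
      _ = T ^ s := by
          rw [div_self (by positivity), mul_one, ← add_div, ← hTdef, div_self hT.ne', mul_one]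
  calc (∫ e, f e ^ s ∂με) ^ (1 / s) ≤ (T ^ s) ^ (1 / s) := by
        apply Real.rpow_le_rpow _ hI (by positivity)
        exact integral_nonneg fun e => Real.rpow_nonneg (hf0 e) _
    _ = T := by
        rw [← Real.rpow_mul hT.le, mul_one_div_cancel hs0.ne', Real.rpow_one]

theorem stmt_4 (q : ℕ) (hq : 1 ≤ q) (s : ℝ) (hs : 1 ≤ s)
    (με : Measure ℝ) (hprob : IsProbabilityMeasure με)
    (hmom : Integrable (fun e => |e| ^ (2 * s)) με)
    (αc : ℕ → ℝ) (hα : ∀ i, 1 ≤ i → i ≤ q → 0 ≤ αc i)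
    (hsum : (∑ i ∈ Finset.Icc 1 q, αc i) < 1 / (∫ e, |e| ^ (2 * s) ∂με) ^ (1 / s)) :
    ∃ N : (Fin q → ℝ) → ℝ, IsVectorNorm N ∧ IsMonotoneNorm N ∧
      sSup {c : ℝ | ∃ x : Fin q → ℝ, N x = 1 ∧
        c = (∫ e, N ((lambdaMat q αc e).mulVec x) ^ s ∂με) ^ (1 / s)} < 1 ∧
      ∀ x : Fin q → ℝ, x ≠ 0 →
        (∫ e, N ((lambdaMat q αc e).mulVec x) ^ s ∂με) ^ (1 / s) < N x := by
  have hs0 : 0 < s := by linarith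
  have hI0 : 0 ≤ ∫ e, |e| ^ (2 * s) ∂με :=
    integral_nonneg fun e => Real.rpow_nonneg (abs_nonneg e) _
  obtain ⟨m, hmdef⟩ : ∃ m, m = (∫ e, |e| ^ (2 * s) ∂με) ^ (1 / s) := ⟨_, rfl⟩
  rw [← hmdef] at hsum
  have hms : ∫ e, |e| ^ (2 * s) ∂με = m ^ s := by
    rw [hmdef, ← Real.rpow_mul hI0, one_div_mul_cancel hs0.ne', Real.rpow_one]
  have hm0 : 0 ≤ m := hmdef ▸ Real.rpow_nonneg hI0 _
  have ha0 : 0 ≤ ∑ i ∈ Finset.Icc 1 q, αc i := Finset.sum_nonneg fun i hi => by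
    rw [Finset.mem_Icc] at hi
    exact hα i hi.1 hi.2
  have hm : 0 < m := by
    refine lt_of_le_of_ne hm0 fun h => ?_
    rw [← h] at hsum
    simp at hsum
    linarith
  have hma : m * (∑ i ∈ Finset.Icc 1 q, αc i) < 1 := by
    rw [lt_div_iff₀ hm] at hsum
    linarith
  have hq0 : (0:ℝ) < q := by exact_mod_cast hq
  have hq1 : (1:ℝ) ≤ q := by exact_mod_cast hq
  obtain ⟨δ, hδ⟩ : ∃ δ, δ = (1 - m * (∑ i ∈ Finset.Icc 1 q, αc i)) / q := ⟨_, rfl⟩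
  have hδ0 : 0 < δ := by rw [hδ]; apply div_pos _ hq0; linarith
  have hδ1 : δ ≤ 1 := by
    rw [hδ, div_le_one hq0]
    have := mul_nonneg hm0 ha0
    linarith
  obtain ⟨w, hw⟩ : ∃ w : ℕ → ℝ,
    w = fun j : ℕ => m * (∑ k ∈ Finset.Icc (j+1) q, αc k) + δ * ((q:ℝ) - j) := ⟨_, rfl⟩
  have hw0 : w 0 = 1 := by
    simp only [hw, hδ]; field_simp; simp; ring
  have hwq : w q = 0 := by simp [hw]
  have hrec : ∀ j, j < q → w j = m * αc (j+1) + δ + w (j+1) := by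
    intro j hj
    simp only [hw]
    rw [← Finset.add_sum_Ioc_eq_sum_Icc (show j + 1 ≤ q from hj)]
    have : Finset.Ioc (j+1) q = Finset.Icc (j+1+1) q := by ext; simp
    rw [this]; push_cast; ring
  have hwnn : ∀ j, j ≤ q → 0 ≤ w j := by
    intro j hj
    simp only [hw]
    have h1 : 0 ≤ ∑ k ∈ Finset.Icc (j+1) q, αc k := Finset.sum_nonneg fun i hi => by
      rw [Finset.mem_Icc] at hi
      exact hα i (by omega) hi.2
    have h2 : (j:ℝ) ≤ q := by exact_mod_cast hj
    have h3 : 0 ≤ (q:ℝ) - j := by linarith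
    positivity
  have hwpos : ∀ j, j < q → 0 < w j := by
    intro j hj
    rw [hrec j hj]
    have := hwnn (j+1) hj
    have := mul_nonneg hm0 (hα (j+1) (by omega) hj)
    linarith
  have hwle : ∀ j, j ≤ q → w j ≤ 1 := by
    intro j
    induction j with
    | zero => intro _; exact hw0.le
    | succ j ih =>
      intro hj
      have := ih (by omega)
      have h2 := hrec j hj
      have := mul_nonneg hm0 (hα (j+1) (by omega) hj)
      linarith
  obtain ⟨N, hN⟩ : ∃ N : (Fin q → ℝ) → ℝ, N = fun x => ∑ i : Fin q, w i * |x i| := ⟨_, rfl⟩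
  have hNnn : ∀ x, 0 ≤ N x := fun x => by
    rw [hN]
    exact Finset.sum_nonneg fun i _ => mul_nonneg (hwpos i i.2).le (abs_nonneg _)
  have hNz : ∀ x, N x = 0 ↔ x = 0 := fun x => by
    simp only [hN]
    rw [Finset.sum_eq_zero_iff_of_nonneg
      fun (i : Fin q) _ => mul_nonneg (hwpos i i.2).le (abs_nonneg _)]
    constructor
    · intro h
      ext i
      rcases mul_eq_zero.1 (h i (Finset.mem_univ i)) with h | h
      · exact absurd h (hwpos i i.2).ne'
      · simpa using h
    · rintro rfl; simp
  have hmain : ∀ x, (∫ e, N ((lambdaMat q αc e).mulVec x) ^ s ∂με) ^ (1 / s)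
      ≤ (1 - δ) * N x := by
    intro x
    have hαj : ∀ j : Fin q, 0 ≤ αc (j+1) := fun j => hα _ (by omega) j.2
    refine (aux_mink s hs με hprob hmom m hm hms (∑ j : Fin q, αc (j+1) * |x j|)
      (∑ j : Fin q, w (j+1) * |x j|)
      (Finset.sum_nonneg fun j _ => mul_nonneg (hαj j) (abs_nonneg _))
      (Finset.sum_nonneg fun j _ => mul_nonneg (hwnn _ j.2) (abs_nonneg _))
      _ (fun e => hNnn _) ?_).trans ?_
    · intro e
      clear hNz
      obtain ⟨n, rfl⟩ : ∃ n, q = n + 1 := ⟨q - 1, by omega⟩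
      simp only [hN]
      rw [Fin.sum_univ_succ]
      apply add_le_add
      · simp only [Fin.val_zero, hw0, one_mul, Matrix.mulVec, dotProduct, lambdaMat,
          Matrix.of_apply, if_true]
        refine (Finset.abs_sum_le_sum_abs _ _).trans (le_of_eq ?_)
        rw [Finset.mul_sum]
        refine Finset.sum_congr rfl fun j _ => ?_
        rw [abs_mul, abs_mul, abs_of_nonneg (hαj j), abs_of_nonneg (sq_nonneg e)]
        ring
      · rw [Fin.sum_univ_castSucc]
        simp only [Fin.val_last, hwq, zero_mul, add_zero, Fin.val_castSucc, Fin.val_succ]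
        refine le_of_eq (Finset.sum_congr rfl fun j _ => ?_)
        congr 2
        simp only [Matrix.mulVec, dotProduct, lambdaMat, Matrix.of_apply]
        rw [Finset.sum_eq_single j.castSucc]
        · simp
        · intro b _ hb
          have : (j:ℕ) ≠ b := fun h => hb (Fin.ext (by simp [h]))
          simp [this]
        · simp
    · simp only [hN]
      rw [Finset.mul_sum, Finset.mul_sum, ← Finset.sum_add_distrib]
      refine Finset.sum_le_sum fun j _ => ?_
      have h1 := hrec j j.2
      have h2 := hwle j j.2.le
      have h3 : m * αc (j+1) + w (j+1) ≤ (1 - δ) * w j := by nlinarith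
      nlinarith [abs_nonneg (x j), mul_le_mul_of_nonneg_right h3 (abs_nonneg (x j))]
  refine ⟨N, ⟨hNnn, hNz, ?_, ?_⟩, ?_, ?_, ?_⟩
  · intro c x
    simp only [hN, Finset.mul_sum, Pi.smul_apply, smul_eq_mul, abs_mul]
    exact Finset.sum_congr rfl fun i _ => by ring
  · intro x y
    simp only [hN, ← Finset.sum_add_distrib, ← mul_add]
    exact Finset.sum_le_sum fun i _ =>
      mul_le_mul_of_nonneg_left (abs_add_le _ _) (hwpos i i.2).le
  · intro x y h
    simp only [hN]
    exact Finset.sum_le_sum fun i _ => mul_le_mul_of_nonneg_left (h i) (hwpos i i.2).le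
  · refine lt_of_le_of_lt (Real.sSup_le (a := 1 - δ) ?_ (by linarith)) (by linarith)
    rintro c ⟨x, hx, rfl⟩
    have := hmain x
    rwa [hx, mul_one] at this
  · intro x hx
    have : 0 < N x := lt_of_le_of_ne (hNnn x) fun h => hx ((hNz x).1 h.symm)
    refine (hmain x).trans_lt ?_
    nlinarith
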